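/- Fix D ∈ ℍ^{m×n}, Ω ⊆ Fin m × Fin n, and λ > 0, and set λ₀ = min(λ, 1). Let A ∈ ℍ^{m×r}, B ∈ ℍ^{r×n}, define X ∈ ℍ^{m×n} by X_{ij} = D_{ij} for (i,j) ∈ Ω and X_{ij} = (A·B)_{ij} otherwise; let A⁺ = (X·Bᴴ + λ·A)·(B·Bᴴ + λ·I)⁻¹, B⁺ = ((A⁺)ᴴ·A⁺ + λ·I)⁻¹·((A⁺)ᴴ·X + λ·B), and define X⁺ ∈ ℍ^{m×n} by X⁺_{ij} = D_{ij} for (i,j) ∈ Ω and X⁺_{ij} = (A⁺·B⁺)_{ij} otherwise. Then ½‖A·B − X‖_F² − ½‖A⁺·B⁺ − X⁺‖_F² ≥ (λ₀/2)·(‖A − A⁺‖_F² + ‖B − B⁺‖_F² + ‖X − X⁺‖_F²). -/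

import Mathlib

open scoped Quaternion Matrix

/-- The Frobenius norm of a quaternion matrix. -/
noncomputable def frob {m n : ℕ} (A : Matrix (Fin m) (Fin n) ℍ[ℝ]) : ℝ :=
  Real.sqrt (∑ i, ∑ j, ‖A i j‖ ^ 2)

noncomputable def ipq {m n : ℕ} (P Q : Matrix (Fin m) (Fin n) ℍ[ℝ]) : ℝ :=
  (Matrix.trace (P * Qᴴ)).re

lemma re_sum_q {ι : Type*} (s : Finset ι) (f : ι → ℍ[ℝ]) :
    (∑ i ∈ s, f i).re = ∑ i ∈ s, (f i).re := by
  classical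
  induction s using Finset.induction_on with
  | empty => simp
  | insert a s ha ih => rw [Finset.sum_insert ha, Finset.sum_insert ha, Quaternion.re_add, ih]

lemma ipq_self {m n : ℕ} (P : Matrix (Fin m) (Fin n) ℍ[ℝ]) : ipq P P = frob P ^ 2 := by
  unfold ipq frob
  rw [Real.sq_sqrt (by positivity)]
  simp only [Matrix.trace, Matrix.diag, Matrix.mul_apply, re_sum_q, Matrix.conjTranspose_apply]
  refine Finset.sum_congr rfl fun i _ => Finset.sum_congr rfl fun j _ => ?_
  rw [Quaternion.self_mul_star, Quaternion.re_coe, Quaternion.normSq_eq_norm_mul_self, sq]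

lemma re_trace_comm {m n : ℕ} (P : Matrix (Fin m) (Fin n) ℍ[ℝ])
    (Q : Matrix (Fin n) (Fin m) ℍ[ℝ]) :
    (Matrix.trace (P * Q)).re = (Matrix.trace (Q * P)).re := by
  simp only [Matrix.trace, Matrix.diag, Matrix.mul_apply, re_sum_q]
  rw [Finset.sum_comm]
  refine Finset.sum_congr rfl fun i _ => Finset.sum_congr rfl fun j _ => ?_
  simp only [Quaternion.re_mul]
  ring

lemma ipq_add_left {m n : ℕ} (P Q R : Matrix (Fin m) (Fin n) ℍ[ℝ]) :
    ipq (P + Q) R = ipq P R + ipq Q R := by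
  simp [ipq, Matrix.add_mul]

lemma ipq_comm {m n : ℕ} (P Q : Matrix (Fin m) (Fin n) ℍ[ℝ]) : ipq P Q = ipq Q P := by
  unfold ipq
  have h : Matrix.trace (Q * Pᴴ) = star (Matrix.trace (P * Qᴴ)) := by
    rw [← Matrix.trace_conjTranspose, Matrix.conjTranspose_mul, Matrix.conjTranspose_conjTranspose]
  rw [h, Quaternion.re_star]

lemma ipq_add_right {m n : ℕ} (P Q R : Matrix (Fin m) (Fin n) ℍ[ℝ]) :
    ipq P (Q + R) = ipq P Q + ipq P R := by
  rw [ipq_comm, ipq_add_left, ipq_comm Q, ipq_comm R]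

lemma ipq_smul_left {m n : ℕ} (c : ℝ) (P Q : Matrix (Fin m) (Fin n) ℍ[ℝ]) :
    ipq (c • P) Q = c * ipq P Q := by
  simp [ipq, Matrix.smul_mul, Matrix.trace_smul]

lemma ipq_mul_right {m k n : ℕ} (P : Matrix (Fin m) (Fin k) ℍ[ℝ]) (Q : Matrix (Fin k) (Fin n) ℍ[ℝ])
    (R : Matrix (Fin m) (Fin n) ℍ[ℝ]) : ipq (P * Q) R = ipq P (R * Qᴴ) := by
  simp [ipq, Matrix.conjTranspose_mul, Matrix.mul_assoc]

lemma ipq_mul_left {m k n : ℕ} (P : Matrix (Fin m) (Fin k) ℍ[ℝ]) (Q : Matrix (Fin k) (Fin n) ℍ[ℝ])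
    (R : Matrix (Fin m) (Fin n) ℍ[ℝ]) : ipq (P * Q) R = ipq Q (Pᴴ * R) := by
  unfold ipq
  rw [Matrix.mul_assoc, re_trace_comm, Matrix.conjTranspose_mul, Matrix.conjTranspose_conjTranspose,
    Matrix.mul_assoc]

lemma frob_eq_zero {m n : ℕ} (P : Matrix (Fin m) (Fin n) ℍ[ℝ]) (h : frob P ^ 2 = 0) : P = 0 := by
  unfold frob at h
  rw [Real.sq_sqrt (by positivity)] at h
  ext1 i j
  rw [Finset.sum_eq_zero_iff_of_nonneg (fun i _ => by positivity)] at h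
  have h1 := h i (Finset.mem_univ _)
  rw [Finset.sum_eq_zero_iff_of_nonneg (fun i _ => by positivity)] at h1
  simpa using h1 j (Finset.mem_univ _)

lemma isUnit_reg {k r : ℕ} (C : Matrix (Fin k) (Fin r) ℍ[ℝ]) (lam : ℝ) (hlam : 0 < lam) :
    IsUnit (Cᴴ * C + lam • (1 : Matrix (Fin r) (Fin r) ℍ[ℝ])) := by
  set M := Cᴴ * C + lam • (1 : Matrix (Fin r) (Fin r) ℍ[ℝ]) with hM
  have key : ∀ Y : Matrix (Fin r) (Fin r) ℍ[ℝ], M * Y = 0 → Y = 0 := by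
    intro Y hY
    have h1 : ipq (M * Y) Y = frob (C * Y) ^ 2 + lam * frob Y ^ 2 := by
      rw [hM, Matrix.add_mul, ipq_add_left, Matrix.smul_mul, Matrix.one_mul, ipq_smul_left,
        ipq_self, Matrix.mul_assoc, ipq_mul_left, Matrix.conjTranspose_conjTranspose, ipq_self]
    have h0 : ipq (M * Y) Y = 0 := by rw [hY]; simp [ipq]
    apply frob_eq_zero
    have h2 := sq_nonneg (frob (C * Y))
    have h3 := sq_nonneg (frob Y)
    have h4 : lam * frob Y ^ 2 = 0 := by
      have := mul_nonneg hlam.le h3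
      linarith
    exact (mul_eq_zero.mp h4).resolve_left hlam.ne'
  have inj : Function.Injective (LinearMap.mulLeft ℝ M) := by
    rw [← LinearMap.ker_eq_bot, LinearMap.ker_eq_bot']
    intro Y hY
    exact key Y hY
  obtain ⟨Y, hY⟩ := LinearMap.surjective_of_injective inj 1
  have hY : M * Y = 1 := hY
  have hY2 : Y * M = 1 := by
    have := key (Y * M - 1) (by rw [mul_sub, ← mul_assoc, hY]; simp)
    exact sub_eq_zero.mp this
  exact ⟨⟨M, Y, hY, hY2⟩, rfl⟩

lemma frob_add_sq {m n : ℕ} (P Q : Matrix (Fin m) (Fin n) ℍ[ℝ]) :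
    frob (P + Q) ^ 2 = frob P ^ 2 + 2 * ipq Q P + frob Q ^ 2 := by
  rw [← ipq_self, ipq_add_left, ipq_add_right, ipq_add_right, ipq_self, ipq_self, ipq_comm P Q]
  ring

/-- Sufficient decrease of the objective f(A,B,X) = ½‖A·B − X‖_F² along one
LRQD iteration. -/
theorem sufficient_decrease {m r n : ℕ}
    (D : Matrix (Fin m) (Fin n) ℍ[ℝ]) (Ω : Set (Fin m × Fin n))
    (lam : ℝ) (hlam : 0 < lam)
    (A : Matrix (Fin m) (Fin r) ℍ[ℝ]) (B : Matrix (Fin r) (Fin n) ℍ[ℝ])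
    (X : Matrix (Fin m) (Fin n) ℍ[ℝ])
    (hXin : ∀ p ∈ Ω, X p.1 p.2 = D p.1 p.2)
    (hXout : ∀ p : Fin m × Fin n, p ∉ Ω → X p.1 p.2 = (A * B) p.1 p.2)
    (Aplus : Matrix (Fin m) (Fin r) ℍ[ℝ]) (Bplus : Matrix (Fin r) (Fin n) ℍ[ℝ])
    (Xplus : Matrix (Fin m) (Fin n) ℍ[ℝ])
    (hAplus : Aplus = (X * Bᴴ + lam • A) *
      Ring.inverse (B * Bᴴ + lam • (1 : Matrix (Fin r) (Fin r) ℍ[ℝ])))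
    (hBplus : Bplus = Ring.inverse (Aplusᴴ * Aplus + lam • (1 : Matrix (Fin r) (Fin r) ℍ[ℝ])) *
      (Aplusᴴ * X + lam • B))
    (hXplusin : ∀ p ∈ Ω, Xplus p.1 p.2 = D p.1 p.2)
    (hXplusout : ∀ p : Fin m × Fin n, p ∉ Ω → Xplus p.1 p.2 = (Aplus * Bplus) p.1 p.2) :
    (1 / 2) * frob (A * B - X) ^ 2 - (1 / 2) * frob (Aplus * Bplus - Xplus) ^ 2 ≥
      (min lam 1 / 2) *
        (frob (A - Aplus) ^ 2 + frob (B - Bplus) ^ 2 + frob (X - Xplus) ^ 2) := by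
  classical
  have uA : IsUnit (B * Bᴴ + lam • (1 : Matrix (Fin r) (Fin r) ℍ[ℝ])) := by
    simpa using isUnit_reg Bᴴ lam hlam
  have uB := isUnit_reg Aplus lam hlam
  have eA : Aplus * (B * Bᴴ + lam • (1 : Matrix (Fin r) (Fin r) ℍ[ℝ])) = X * Bᴴ + lam • A := by
    rw [hAplus, Matrix.mul_assoc, Ring.inverse_mul_cancel _ uA, Matrix.mul_one]
  have eB : (Aplusᴴ * Aplus + lam • (1 : Matrix (Fin r) (Fin r) ℍ[ℝ])) * Bplus
      = Aplusᴴ * X + lam • B := by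
    rw [hBplus, ← Matrix.mul_assoc, Ring.mul_inverse_cancel _ uB, Matrix.one_mul]
  have nA : (Aplus * B - X) * Bᴴ = lam • (A - Aplus) := by
    rw [Matrix.mul_add, Matrix.mul_smul, Matrix.mul_one, ← Matrix.mul_assoc] at eA
    rw [Matrix.sub_mul, smul_sub, sub_eq_sub_iff_add_eq_add, eA]
    abel
  have nB : Aplusᴴ * (Aplus * Bplus - X) = lam • (B - Bplus) := by
    rw [Matrix.add_mul, Matrix.smul_mul, Matrix.one_mul, Matrix.mul_assoc] at eB
    rw [Matrix.mul_sub, smul_sub, sub_eq_sub_iff_add_eq_add, eB]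
    abel
  have s1 : frob (A * B - X) ^ 2 = frob (Aplus * B - X) ^ 2 + 2 * (lam * frob (A - Aplus) ^ 2)
      + frob ((A - Aplus) * B) ^ 2 := by
    have : A * B - X = (Aplus * B - X) + (A - Aplus) * B := by rw [Matrix.sub_mul]; abel
    rw [this, frob_add_sq, ipq_mul_right, nA, ipq_comm, ipq_smul_left, ipq_self]
  have s2 : frob (Aplus * B - X) ^ 2 = frob (Aplus * Bplus - X) ^ 2
      + 2 * (lam * frob (B - Bplus) ^ 2) + frob (Aplus * (B - Bplus)) ^ 2 := by
    have : Aplus * B - X = (Aplus * Bplus - X) + Aplus * (B - Bplus) := by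
      rw [Matrix.mul_sub]; abel
    rw [this, frob_add_sq, ipq_mul_left, nB, ipq_comm, ipq_smul_left, ipq_self]
  have s3 : frob (Aplus * Bplus - X) ^ 2 = frob (Aplus * Bplus - Xplus) ^ 2
      + frob (X - Xplus) ^ 2 := by
    unfold frob
    rw [Real.sq_sqrt (by positivity), Real.sq_sqrt (by positivity), Real.sq_sqrt (by positivity),
      ← Finset.sum_add_distrib]
    refine Finset.sum_congr rfl fun i _ => ?_
    rw [← Finset.sum_add_distrib]
    refine Finset.sum_congr rfl fun j _ => ?_
    simp only [Matrix.sub_apply]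
    by_cases h : (i, j) ∈ Ω
    · have h1 := hXin _ h
      have h2 := hXplusin _ h
      simp only at h1 h2
      rw [h1, h2]; simp
    · have h2 := hXplusout _ h
      simp only at h2
      rw [h2, norm_sub_rev]; simp
  have p1 := sq_nonneg (frob ((A - Aplus) * B))
  have p2 := sq_nonneg (frob (Aplus * (B - Bplus)))
  have q1 := mul_le_mul_of_nonneg_right (min_le_left lam 1) (sq_nonneg (frob (A - Aplus)))
  have q2 := mul_le_mul_of_nonneg_right (min_le_left lam 1) (sq_nonneg (frob (B - Bplus)))
  have q3 := mul_le_mul_of_nonneg_right (min_le_right lam 1) (sq_nonneg (frob (X - Xplus)))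
  have r1 := mul_nonneg hlam.le (sq_nonneg (frob (A - Aplus)))
  have r2 := mul_nonneg hlam.le (sq_nonneg (frob (B - Bplus)))
  rw [s1, s2, s3]
  linarith
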